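/- Assume (H1), that K(u,v) = K⁽¹⁾(u)K⁽²⁾(v) with K⁽¹⁾ supported in [−A,A]^{d1}, and that f_X is positive and continuous on a neighborhood of x. Let (h⁽ⁿ⁾)_n be bandwidths with max_i h_i⁽ⁿ⁾ → 0 as n → ∞. Then R_x²(f̂_{h⁽ⁿ⁾},2) ≥ ‖K_{h⁽ⁿ⁾}*f − f‖²_{x,2} + (‖K‖₂² / (f_X(x) n ∏_{i=1}^d h_i⁽ⁿ⁾))·(1+o(1)) + O(1/n) as n → ∞; precisely, for every ε > 0 there exist N ∈ ℕ and a constant C depending only on ‖K‖₁ and ‖f‖_∞ such that for all n ≥ N, R_x²(f̂_{h⁽ⁿ⁾},2) ≥ ‖K_{h⁽ⁿ⁾}*f − f‖²_{x,2} + (1−ε)‖K‖₂² / (f_X(x) n ∏_{i=1}^d h_i⁽ⁿ⁾) − C/n. -/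

import Mathlib

open MeasureTheory ProbabilityTheory Filter

/-!
Write the estimator as the sample mean of the functions `y ↦ k(U_i, y - V_i) / f_X(U_i)`, where
`(U_i, V_i)` are the observations and `k` is the dilated kernel centred at `x`. Integrating the
pointwise bias–variance identity over `y`, the risk is the squared bias of the mean `K_h * f` plus
`1/n` times the integrated second moment minus the integrated square of the mean.

* The shear `((u, v), y) ↦ (u, y - v)` carries the product of the law of the observations and the
  invariant measure to the measure with density `f_X(u)`, so the second moment is exactly
  `∬ k² / f_X`. As the support of `k` shrinks to `x`, continuity of `f_X` bounds this below by
  `(1 - ε) ∬ k² / f_X(x)`, and dilation gives `∬ k² = ‖K‖₂² / ∏ h_i`.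
* The mean is at most `‖f‖_∞ ‖K‖₁` in sup norm, and at most `‖K‖₁` in `L¹` by the same shear, so
  the integral of its square is at most `‖f‖_∞ ‖K‖₁²`, which the factor `1/n` turns into `O(1/n)`.
-/

open Function Topology

section BiasVariance

variable {Ω : Type*} [MeasurableSpace Ω] {P : Measure Ω}

lemma integral_sub_const_sq [IsProbabilityMeasure P] {ξ : Ω → ℝ} (hξ : MemLp ξ 2 P) (c : ℝ) :
    ∫ ω, (ξ ω - c) ^ 2 ∂P = ((∫ ω, ξ ω ∂P) - c) ^ 2 + Var[ξ; P] := by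
  have hvar := variance_eq_sub (hξ.sub (memLp_const c))
  have hmean : ∫ ω, (ξ ω - c) ∂P = (∫ ω, ξ ω ∂P) - c := by
    simp [integral_sub (hξ.integrable one_le_two) (integrable_const c)]
  simp only [Pi.sub_def, Pi.pow_def, hmean, variance_sub_const hξ.aestronglyMeasurable] at hvar
  linarith

lemma integral_sq_eq_sq_integral_add_variance [IsProbabilityMeasure P] {ξ : Ω → ℝ}
    (hξ : MemLp ξ 2 P) :
    ∫ ω, ξ ω ^ 2 ∂P = (∫ ω, ξ ω ∂P) ^ 2 + Var[ξ; P] := by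
  simpa using integral_sub_const_sq hξ 0

lemma integral_sampleMean {ξ : ℕ → Ω → ℝ} (hξ : ∀ i, Integrable (ξ i) P) {m : ℝ}
    (hm : ∀ i, ∫ ω, ξ i ω ∂P = m) {n : ℕ} (hn : n ≠ 0) :
    ∫ ω, (n : ℝ)⁻¹ * ∑ i ∈ Finset.range n, ξ i ω ∂P = m := by
  rw [integral_const_mul, integral_finsetSum _ fun i _ => hξ i]
  simp [hm, hn]

lemma variance_sampleMean {ξ : ℕ → Ω → ℝ} (hξ : ∀ i, MemLp (ξ i) 2 P)
    (hindep : Pairwise fun i j => ξ i ⟂ᵢ[P] ξ j) {v : ℝ} (hv : ∀ i, Var[ξ i; P] = v) {n : ℕ}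
    (hn : n ≠ 0) :
    Var[fun ω => (n : ℝ)⁻¹ * ∑ i ∈ Finset.range n, ξ i ω; P] = (n : ℝ)⁻¹ * v := by
  have hsum : Var[fun ω => ∑ i ∈ Finset.range n, ξ i ω; P] = n * v := by
    simpa [hv, Finset.sum_fn] using
      IndepFun.variance_sum (fun i _ => hξ i) (hindep.set_pairwise (Finset.range n : Set ℕ))
  rw [variance_const_mul, hsum]
  field_simp

lemma integral_sampleMean_sub_sq [IsProbabilityMeasure P] {ξ : ℕ → Ω → ℝ}
    (hξ : ∀ i, MemLp (ξ i) 2 P)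
    (hindep : Pairwise fun i j => ξ i ⟂ᵢ[P] ξ j) {m v : ℝ} (hm : ∀ i, ∫ ω, ξ i ω ∂P = m)
    (hv : ∀ i, Var[ξ i; P] = v) {n : ℕ} (hn : n ≠ 0) (c : ℝ) :
    ∫ ω, ((n : ℝ)⁻¹ * ∑ i ∈ Finset.range n, ξ i ω - c) ^ 2 ∂P
      = (m - c) ^ 2 + (n : ℝ)⁻¹ * v := by
  rw [integral_sub_const_sq ((memLp_finsetSum _ fun i _ => hξ i).const_mul _),
    integral_sampleMean (fun i => (hξ i).integrable one_le_two) hm hn,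
    variance_sampleMean hξ hindep hv hn]

end BiasVariance

section IntegratedBiasVariance

variable {Ω E F : Type*} [MeasurableSpace Ω] [MeasurableSpace E] [MeasurableSpace F]
  {P : Measure Ω} [IsProbabilityMeasure P] {μ : Measure E}
  {ν : Measure F} [SFinite ν] {W : E → F → ℝ}

lemma ae_memLp_two_section [SFinite μ] (hW : MemLp (uncurry W) 2 (μ.prod ν)) :
    ∀ᵐ y ∂ν, MemLp (fun z => W z y) 2 μ := by
  filter_upwards [hW.1.prod_swap.prodMk_left, hW.integrable_sq.prod_left_ae] with y hmeas hsq
  exact (memLp_two_iff_integrable_sq hmeas).2 hsq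

lemma memLp_two_integral_left [IsProbabilityMeasure μ] (hW : MemLp (uncurry W) 2 (μ.prod ν)) :
    MemLp (fun y => ∫ z, W z y ∂μ) 2 ν := by
  have hmeas : AEStronglyMeasurable (fun y => ∫ z, W z y ∂μ) ν :=
    hW.1.prod_swap.integral_prod_right'
  refine (memLp_two_iff_integrable_sq hmeas).2 <|
    hW.integrable_sq.integral_prod_right.mono' (hmeas.pow 2) ?_
  filter_upwards [ae_memLp_two_section hW] with y hy
  rw [Real.norm_of_nonneg (sq_nonneg _)]
  exact (le_add_of_nonneg_right (variance_nonneg _ _)).trans_eq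
    (integral_sq_eq_sq_integral_add_variance hy).symm

lemma integral_sampleMean_section_sub_sq [IsProbabilityMeasure μ]
    (hW : MemLp (uncurry W) 2 (μ.prod ν)) {Z : ℕ → Ω → E}
    (hZ : ∀ i, MeasurePreserving (Z i) P μ) (hindep : Pairwise fun i j => Z i ⟂ᵢ[P] Z j)
    {n : ℕ} (hn : n ≠ 0) (φ : F → ℝ) :
    ∀ᵐ y ∂ν, ∫ ω, ((n : ℝ)⁻¹ * ∑ i ∈ Finset.range n, W (Z i ω) y - φ y) ^ 2 ∂P
      = ((∫ z, W z y ∂μ) - φ y) ^ 2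
        + (n : ℝ)⁻¹ * ((∫ z, W z y ^ 2 ∂μ) - (∫ z, W z y ∂μ) ^ 2) := by
  filter_upwards [ae_memLp_two_section hW] with y hy
  have hvar : Var[fun z => W z y; μ] = (∫ z, W z y ^ 2 ∂μ) - (∫ z, W z y ∂μ) ^ 2 :=
    variance_eq_sub hy
  rw [← hvar]
  refine integral_sampleMean_sub_sq (fun i => hy.comp_measurePreserving (hZ i))
    (fun i j hij => ?_) (fun i => (hZ i).hasLaw.integral_comp hy.1)
    (fun i => ?_) hn _
  · exact (hindep hij).comp₀ (hZ i).measurable.aemeasurable (hZ j).measurable.aemeasurable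
      ((hZ i).map_eq ▸ hy.1.aemeasurable) ((hZ j).map_eq ▸ hy.1.aemeasurable)
  · have hy' : AEMeasurable (fun z => W z y) (P.map (Z i)) := (hZ i).map_eq ▸ hy.1.aemeasurable
    rw [← (hZ i).map_eq, variance_map hy' (hZ i).measurable.aemeasurable, comp_def]

lemma integrable_sampleMean_sub_sq (hW : MemLp (uncurry W) 2 (μ.prod ν)) {Z : ℕ → Ω → E}
    (hZ : ∀ i, MeasurePreserving (Z i) P μ) {φ : F → ℝ} (hφ : MemLp φ 2 ν) (n : ℕ) :
    Integrable (uncurry fun ω y =>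
      ((n : ℝ)⁻¹ * ∑ i ∈ Finset.range n, W (Z i ω) y - φ y) ^ 2) (P.prod ν) := by
  have hWZ (i : ℕ) : MemLp (fun q : Ω × F => W (Z i q.1) q.2) 2 (P.prod ν) :=
    hW.comp_measurePreserving ((hZ i).prod (.id ν))
  have hφ' : MemLp (fun q : Ω × F => φ q.2) 2 (P.prod ν) :=
    hφ.comp_measurePreserving measurePreserving_snd
  exact (((memLp_finsetSum _ fun i _ => hWZ i).const_mul _).sub hφ').integrable_sq

theorem integral_integral_sampleMean_sub_sq [IsProbabilityMeasure μ]
    (hW : MemLp (uncurry W) 2 (μ.prod ν))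
    {Z : ℕ → Ω → E} (hZ : ∀ i, MeasurePreserving (Z i) P μ)
    (hindep : Pairwise fun i j => Z i ⟂ᵢ[P] Z j) {φ : F → ℝ} (hφ : MemLp φ 2 ν) {n : ℕ}
    (hn : n ≠ 0) :
    ∫ ω, ∫ y, ((n : ℝ)⁻¹ * ∑ i ∈ Finset.range n, W (Z i ω) y - φ y) ^ 2 ∂ν ∂P
      = (∫ y, ((∫ z, W z y ∂μ) - φ y) ^ 2 ∂ν)
        + (n : ℝ)⁻¹ * ((∫ q, uncurry W q ^ 2 ∂μ.prod ν) - ∫ y, (∫ z, W z y ∂μ) ^ 2 ∂ν) := by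
  have hmean := memLp_two_integral_left hW
  have hsq : Integrable (fun y => ∫ z, W z y ^ 2 ∂μ) ν := hW.integrable_sq.integral_prod_right
  rw [integral_integral_swap (integrable_sampleMean_sub_sq hW hZ hφ n),
    integral_congr_ae (integral_sampleMean_section_sub_sq hW hZ hindep hn φ),
    integral_add (by exact (hmean.sub hφ).integrable_sq)
      (by exact (hsq.sub hmean.integrable_sq).const_mul _),
    integral_const_mul, integral_sub hsq hmean.integrable_sq,
    integral_prod_symm _ hW.integrable_sq]
  rfl

end IntegratedBiasVariance

section ConditionalDensity

variable {E F : Type*} [MeasurableSpace F] {ν : Measure F} {p : E → F → ℝ}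

/-- The density `f_X` of the first coordinate of a random vector with joint density `p`. -/
noncomputable def marginalDensity (ν : Measure F) (p : E → F → ℝ) (u : E) : ℝ := ∫ v, p u v ∂ν

/-- The conditional density `f(u, v) = p(u, v) / f_X(u)` of the second coordinate given the first;
it is `0` where `f_X(u) = 0`. -/
noncomputable def condDensity (ν : Measure F) (p : E → F → ℝ) (u : E) (v : F) : ℝ :=
  p u v / marginalDensity ν p u

lemma marginalDensity_nonneg (hp₀ : ∀ u v, 0 ≤ p u v) (u : E) : 0 ≤ marginalDensity ν p u :=
  integral_nonneg (hp₀ u)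

lemma condDensity_nonneg (hp₀ : ∀ u v, 0 ≤ p u v) (u : E) (v : F) : 0 ≤ condDensity ν p u v :=
  div_nonneg (hp₀ u v) (marginalDensity_nonneg hp₀ u)

variable [MeasurableSpace E] {ρ : Measure E}

/-- The law on `E × F` with density `p` with respect to `ρ.prod ν`. -/
noncomputable def jointLaw (ρ : Measure E) (ν : Measure F) (p : E → F → ℝ) : Measure (E × F) :=
  (ρ.prod ν).withDensity fun z => ENNReal.ofReal (p z.1 z.2)

lemma measurable_marginalDensity [SFinite ν] (hp : Measurable (uncurry p)) :
    Measurable (marginalDensity ν p) :=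
  (hp.stronglyMeasurable.integral_prod_right' (ν := ν)).measurable

lemma measurable_condDensity [SFinite ν] (hp : Measurable (uncurry p)) :
    Measurable (uncurry (condDensity ν p)) :=
  hp.div ((measurable_marginalDensity hp).comp measurable_fst)

lemma integrable_of_isFiniteMeasure_jointLaw (hp : Measurable (uncurry p))
    (hp₀ : ∀ u v, 0 ≤ p u v) [IsFiniteMeasure (jointLaw ρ ν p)] :
    Integrable (uncurry p) (ρ.prod ν) := by
  refine ⟨hp.aestronglyMeasurable,
    (hasFiniteIntegral_iff_ofReal (ae_of_all _ fun z : E × F => hp₀ z.1 z.2)).2 ?_⟩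
  simpa [jointLaw] using measure_lt_top (jointLaw ρ ν p) Set.univ

lemma measurePreserving_fst_jointLaw [SFinite ρ] [SFinite ν] (hp : Measurable (uncurry p))
    (hp₀ : ∀ u v, 0 ≤ p u v) [IsFiniteMeasure (jointLaw ρ ν p)] :
    MeasurePreserving Prod.fst (jointLaw ρ ν p)
      (ρ.withDensity fun u => ENNReal.ofReal (marginalDensity ν p u)) := by
  refine ⟨measurable_fst, Measure.ext fun s hs => ?_⟩
  have hint : Integrable (uncurry p) (ρ.prod ν) := integrable_of_isFiniteMeasure_jointLaw hp hp₀
  have hmarg : ∀ᵐ u ∂ρ, ∫⁻ v, ENNReal.ofReal (p u v) ∂ν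
      = ENNReal.ofReal (marginalDensity ν p u) := by
    filter_upwards [hint.prod_right_ae] with u hu
    exact (ofReal_integral_eq_lintegral_ofReal hu (ae_of_all _ (hp₀ u))).symm
  rw [Measure.map_apply measurable_fst hs, jointLaw, withDensity_apply _ (measurable_fst hs),
    withDensity_apply _ hs, ← Set.prod_univ, ← Measure.prod_restrict, Measure.restrict_univ,
    lintegral_prod _ (by exact hp.ennreal_ofReal.aemeasurable)]
  exact lintegral_congr_ae (ae_restrict_of_ae hmarg)

variable [SFinite ρ] [SFinite ν] [AddCommGroup F] [MeasurableAdd₂ F] [MeasurableNeg F]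
  [ν.IsAddLeftInvariant] [IsFiniteMeasure (jointLaw ρ ν p)]

lemma measurePreserving_shear_jointLaw (hp : Measurable (uncurry p)) (hp₀ : ∀ u v, 0 ≤ p u v) :
    MeasurePreserving (fun q : (E × F) × F => (q.1.1, q.2 - q.1.2)) ((jointLaw ρ ν p).prod ν)
      ((ρ.prod ν).withDensity fun z => ENNReal.ofReal (marginalDensity ν p z.1)) := by
  rw [← prod_withDensity_left (measurable_marginalDensity hp).ennreal_ofReal]
  exact (measurePreserving_fst_jointLaw hp hp₀).skew_product (g := fun z y => y - z.2)
    (by unfold uncurry; fun_prop)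
    (ae_of_all _ fun z => (measurePreserving_sub_right ν z.2).map_eq)

lemma integral_shear_jointLaw (hp : Measurable (uncurry p)) (hp₀ : ∀ u v, 0 ≤ p u v)
    {H : E × F → ℝ} (hH : AEStronglyMeasurable H (ρ.prod ν)) :
    ∫ q, H (q.1.1, q.2 - q.1.2) ∂(jointLaw ρ ν p).prod ν
      = ∫ z, marginalDensity ν p z.1 * H z ∂ρ.prod ν := by
  have hm : Measurable fun z : E × F => ENNReal.ofReal (marginalDensity ν p z.1) :=
    ((measurable_marginalDensity hp).comp measurable_fst).ennreal_ofReal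
  calc ∫ q, H (q.1.1, q.2 - q.1.2) ∂(jointLaw ρ ν p).prod ν
      = ∫ z, H z ∂(ρ.prod ν).withDensity fun z => ENNReal.ofReal (marginalDensity ν p z.1) :=
        (measurePreserving_shear_jointLaw hp hp₀).hasLaw.integral_comp
          (hH.mono_ac (withDensity_absolutelyContinuous _ _))
    _ = ∫ z, marginalDensity ν p z.1 * H z ∂ρ.prod ν := by
        rw [integral_withDensity_eq_integral_toReal_smul hm (ae_of_all _ fun _ => by simp)]
        simp only [ENNReal.toReal_ofReal (marginalDensity_nonneg hp₀ _), smul_eq_mul]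

lemma integrable_shear_jointLaw (hp : Measurable (uncurry p)) (hp₀ : ∀ u v, 0 ≤ p u v)
    {H : E × F → ℝ} (hH : Integrable (fun z => marginalDensity ν p z.1 * H z) (ρ.prod ν)) :
    Integrable (fun q : (E × F) × F => H (q.1.1, q.2 - q.1.2)) ((jointLaw ρ ν p).prod ν) := by
  have hm : Measurable fun z : E × F => ENNReal.ofReal (marginalDensity ν p z.1) :=
    ((measurable_marginalDensity hp).comp measurable_fst).ennreal_ofReal
  refine (measurePreserving_shear_jointLaw hp hp₀).integrable_comp_of_integrable ?_
  rw [integrable_withDensity_iff_integrable_smul' hm (ae_of_all _ fun _ => by simp)]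
  simpa only [comp_def, ENNReal.toReal_ofReal (marginalDensity_nonneg hp₀ _), smul_eq_mul] using hH

end ConditionalDensity

lemma mul_div_sq {𝕜 : Type*} [Field 𝕜] (a b : 𝕜) : a * (b / a) ^ 2 = b ^ 2 / a := by
  rcases eq_or_ne a 0 with rfl | ha
  · simp
  · field_simp

lemma mul_abs_div_le {a : ℝ} (ha : 0 ≤ a) (b : ℝ) : a * |b / a| ≤ |b| := by
  rw [abs_div, abs_of_nonneg ha, mul_div_left_comm]
  exact mul_le_of_le_one_right (abs_nonneg b) (div_self_le_one a)

section KernelEstimator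

variable {Ω E F : Type*} [MeasurableSpace F] {ν : Measure F} {p k : E → F → ℝ}

lemma abs_mul_condDensity_le (hp₀ : ∀ u v, 0 ≤ p u v) {B : ℝ}
    (hB : ∀ u w, k u w ≠ 0 → ∀ v, condDensity ν p u v ≤ B) (u : E) (w v : F) :
    |k u w * condDensity ν p u v| ≤ B * |k u w| := by
  rcases eq_or_ne (k u w) 0 with hk | hk
  · simp [hk]
  · rw [abs_mul, abs_of_nonneg (condDensity_nonneg hp₀ _ _), mul_comm]
    gcongr
    exact hB _ _ hk _

section DivMarginal

variable [MeasurableSpace E] {ρ : Measure E} [SFinite ν] {c M : ℝ}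

lemma aestronglyMeasurable_div_marginalDensity (hp : Measurable (uncurry p))
    (hk : AEStronglyMeasurable (uncurry k) (ρ.prod ν)) :
    AEStronglyMeasurable (fun z => k z.1 z.2 / marginalDensity ν p z.1) (ρ.prod ν) :=
  (hk.aemeasurable.div
    ((measurable_marginalDensity hp).comp measurable_fst).aemeasurable).aestronglyMeasurable

lemma integrable_sq_div_marginalDensity (hp : Measurable (uncurry p))
    (hk2 : Integrable (fun z => uncurry k z ^ 2) (ρ.prod ν)) (hc : 0 < c)
    (hlow : ∀ u w, k u w ≠ 0 → c ≤ marginalDensity ν p u) :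
    Integrable (fun z => k z.1 z.2 ^ 2 / marginalDensity ν p z.1) (ρ.prod ν) := by
  refine (hk2.div_const c).mono (hk2.1.aemeasurable.div ((measurable_marginalDensity hp).comp
    measurable_fst).aemeasurable).aestronglyMeasurable (ae_of_all _ fun z => ?_)
  rcases eq_or_ne (k z.1 z.2) 0 with hkz | hkz
  · simp [uncurry, hkz]
  · have hcm := hlow z.1 z.2 hkz
    rw [norm_div, norm_div, Real.norm_of_nonneg hc.le, Real.norm_of_nonneg (hc.trans_le hcm).le]
    exact div_le_div_of_nonneg_left (norm_nonneg _) hc hcm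

lemma inv_mul_integral_sq_le_integral_sq_div_marginalDensity (hp : Measurable (uncurry p))
    (hk2 : Integrable (fun z => uncurry k z ^ 2) (ρ.prod ν)) (hc : 0 < c)
    (hlow : ∀ u w, k u w ≠ 0 → c ≤ marginalDensity ν p u)
    (hup : ∀ u w, k u w ≠ 0 → marginalDensity ν p u ≤ M) :
    M⁻¹ * ∫ z, uncurry k z ^ 2 ∂ρ.prod ν
      ≤ ∫ z, k z.1 z.2 ^ 2 / marginalDensity ν p z.1 ∂ρ.prod ν := by
  rw [← integral_const_mul]
  refine integral_mono (hk2.const_mul _) (integrable_sq_div_marginalDensity hp hk2 hc hlow)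
    fun z => ?_
  rcases eq_or_ne (k z.1 z.2) 0 with hkz | hkz
  · simp [uncurry, hkz]
  · have hm := hc.trans_le (hlow z.1 z.2 hkz)
    have hmM := hup z.1 z.2 hkz
    simp only [uncurry, mul_comm M⁻¹, div_eq_mul_inv]
    gcongr

end DivMarginal

variable [AddCommGroup F]

/-- The contribution `k(u, y - v) / f_X(u)` of the observation `z = (u, v)` to the kernel estimator
at `y`. The kernel `k` is already centred in its first argument: for the estimator of `f(x, ·)` it
is `k u v = K_h(x - u, v)`. -/
noncomputable def kernelWeight (ν : Measure F) (p k : E → F → ℝ) (z : E × F) (y : F) : ℝ :=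
  k z.1 (y - z.2) / marginalDensity ν p z.1

/-- The kernel estimator of a conditional density based on the first `n` observations, with the
kernel `k` centred as in `kernelWeight`. -/
noncomputable def kernelEstimator (ν : Measure F) (p k : E → F → ℝ) (Z : ℕ → Ω → E × F) (n : ℕ)
    (ω : Ω) (y : F) : ℝ :=
  (n : ℝ)⁻¹ * ∑ i ∈ Finset.range n, kernelWeight ν p k (Z i ω) y

variable [MeasurableSpace E] {ρ : Measure E}

/-- The convolution `K_h * f` of the kernel with the conditional density, for the kernel `k`
centred as in `kernelWeight`. -/
noncomputable def smoothedCondDensity (ρ : Measure E) (ν : Measure F) (p k : E → F → ℝ) (y : F) :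
    ℝ :=
  ∫ u, ∫ v, k u (y - v) * condDensity ν p u v ∂ν ∂ρ

variable [SFinite ρ] [SFinite ν] [MeasurableAdd₂ F] [MeasurableNeg F] [ν.IsAddLeftInvariant]

section Moments

variable [IsFiniteMeasure (jointLaw ρ ν p)]

lemma memLp_two_kernelWeight (hp : Measurable (uncurry p)) (hp₀ : ∀ u v, 0 ≤ p u v)
    (hk : AEStronglyMeasurable (uncurry k) (ρ.prod ν))
    (hk2 : Integrable (fun z => k z.1 z.2 ^ 2 / marginalDensity ν p z.1) (ρ.prod ν)) :
    MemLp (uncurry (kernelWeight ν p k)) 2 ((jointLaw ρ ν p).prod ν) := by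
  have hmeas : AEStronglyMeasurable (uncurry (kernelWeight ν p k)) ((jointLaw ρ ν p).prod ν) :=
    ((aestronglyMeasurable_div_marginalDensity hp hk).mono_ac
      (withDensity_absolutelyContinuous _ _)).comp_measurePreserving
        (measurePreserving_shear_jointLaw hp hp₀)
  refine (memLp_two_iff_integrable_sq hmeas).2 (integrable_shear_jointLaw hp hp₀
    (H := fun z => (k z.1 z.2 / marginalDensity ν p z.1) ^ 2) ?_)
  simpa only [mul_div_sq] using hk2

lemma integral_sq_kernelWeight (hp : Measurable (uncurry p)) (hp₀ : ∀ u v, 0 ≤ p u v)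
    (hk : AEStronglyMeasurable (uncurry k) (ρ.prod ν)) :
    ∫ q, uncurry (kernelWeight ν p k) q ^ 2 ∂(jointLaw ρ ν p).prod ν
      = ∫ z, k z.1 z.2 ^ 2 / marginalDensity ν p z.1 ∂ρ.prod ν :=
  (integral_shear_jointLaw hp hp₀ ((aestronglyMeasurable_div_marginalDensity hp hk).pow 2)).trans
    (by simp only [Pi.pow_apply, mul_div_sq])

lemma integrable_kernelWeight (hp : Measurable (uncurry p)) (hp₀ : ∀ u v, 0 ≤ p u v)
    (hk : Integrable (uncurry k) (ρ.prod ν)) :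
    Integrable (uncurry (kernelWeight ν p k)) ((jointLaw ρ ν p).prod ν) := by
  have hm : Measurable fun z : E × F => marginalDensity ν p z.1 :=
    (measurable_marginalDensity hp).comp measurable_fst
  refine integrable_shear_jointLaw hp hp₀ (H := fun z => k z.1 z.2 / marginalDensity ν p z.1) <|
    hk.mono (hm.aestronglyMeasurable.mul (aestronglyMeasurable_div_marginalDensity hp hk.1)) <|
      ae_of_all _ fun z => ?_
  have hm₀ := marginalDensity_nonneg (ν := ν) hp₀ z.1
  rw [norm_mul, Real.norm_of_nonneg hm₀]
  exact mul_abs_div_le hm₀ _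

lemma integral_abs_kernelWeight_le (hp : Measurable (uncurry p)) (hp₀ : ∀ u v, 0 ≤ p u v)
    (hk : Integrable (uncurry k) (ρ.prod ν)) :
    ∫ q, |uncurry (kernelWeight ν p k) q| ∂(jointLaw ρ ν p).prod ν
      ≤ ∫ z, |uncurry k z| ∂ρ.prod ν :=
  (integral_shear_jointLaw hp hp₀ (aestronglyMeasurable_div_marginalDensity hp hk.1).norm).trans_le
    <| integral_mono_of_nonneg
      (ae_of_all _ fun _ => mul_nonneg (marginalDensity_nonneg hp₀ _) (norm_nonneg _)) hk.abs
      (ae_of_all _ fun _ => mul_abs_div_le (marginalDensity_nonneg hp₀ _) _)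

end Moments

section Mean

variable [ν.IsNegInvariant] {B : ℝ}

lemma measurePreserving_prod_sub_left (y : F) :
    MeasurePreserving (fun z : E × F => (z.1, y - z.2)) (ρ.prod ν) (ρ.prod ν) :=
  (MeasurePreserving.id ρ).prod (ν.measurePreserving_sub_left y)

lemma integrable_mul_condDensity (hp : Measurable (uncurry p)) (hp₀ : ∀ u v, 0 ≤ p u v)
    (hk : Integrable (uncurry k) (ρ.prod ν))
    (hB : ∀ u w, k u w ≠ 0 → ∀ v, condDensity ν p u v ≤ B) (y : F) :
    Integrable (fun z => k z.1 (y - z.2) * condDensity ν p z.1 z.2) (ρ.prod ν) := by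
  have hky : Integrable (fun z => k z.1 (y - z.2)) (ρ.prod ν) :=
    (measurePreserving_prod_sub_left y).integrable_comp_of_integrable hk
  exact (hky.abs.const_mul B).mono' (hky.1.mul (measurable_condDensity hp).aestronglyMeasurable)
    (ae_of_all _ fun z => abs_mul_condDensity_le hp₀ hB z.1 (y - z.2) z.2)

lemma integral_kernelWeight (hp : Measurable (uncurry p)) (hp₀ : ∀ u v, 0 ≤ p u v)
    (hk : Integrable (uncurry k) (ρ.prod ν))
    (hB : ∀ u w, k u w ≠ 0 → ∀ v, condDensity ν p u v ≤ B) (y : F) :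
    ∫ z, kernelWeight ν p k z y ∂jointLaw ρ ν p = smoothedCondDensity ρ ν p k y := by
  rw [jointLaw, integral_withDensity_eq_integral_toReal_smul (by exact hp.ennreal_ofReal)
    (ae_of_all _ fun _ => by simp), smoothedCondDensity,
    ← integral_prod _ (integrable_mul_condDensity hp hp₀ hk hB y)]
  refine integral_congr_ae (ae_of_all _ fun z => ?_)
  simp only [kernelWeight, condDensity, ENNReal.toReal_ofReal (hp₀ _ _), smul_eq_mul]
  ring

lemma abs_smoothedCondDensity_le (hp : Measurable (uncurry p)) (hp₀ : ∀ u v, 0 ≤ p u v)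
    (hk : Integrable (uncurry k) (ρ.prod ν))
    (hB : ∀ u w, k u w ≠ 0 → ∀ v, condDensity ν p u v ≤ B) (y : F) :
    |smoothedCondDensity ρ ν p k y| ≤ B * ∫ z, |uncurry k z| ∂ρ.prod ν := by
  have hpres := measurePreserving_prod_sub_left (ρ := ρ) (ν := ν) y
  have hky : Integrable (fun z => k z.1 (y - z.2)) (ρ.prod ν) :=
    hpres.integrable_comp_of_integrable hk
  rw [smoothedCondDensity, ← integral_prod _ (integrable_mul_condDensity hp hp₀ hk hB y)]
  calc |∫ z, k z.1 (y - z.2) * condDensity ν p z.1 z.2 ∂ρ.prod ν|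
      ≤ ∫ z, B * |k z.1 (y - z.2)| ∂ρ.prod ν :=
        abs_integral_le_integral_abs.trans <|
          integral_mono_of_nonneg (ae_of_all _ fun _ => abs_nonneg _) (hky.abs.const_mul B)
            (ae_of_all _ fun z => abs_mul_condDensity_le hp₀ hB z.1 (y - z.2) z.2)
    _ = B * ∫ z, |uncurry k z| ∂ρ.prod ν := by
        rw [integral_const_mul]
        exact congrArg (B * ·) (hpres.hasLaw.integral_comp hk.abs.1)

lemma integral_sq_smoothedCondDensity_le [IsFiniteMeasure (jointLaw ρ ν p)]
    (hp : Measurable (uncurry p)) (hp₀ : ∀ u v, 0 ≤ p u v)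
    (hk : Integrable (uncurry k) (ρ.prod ν))
    (hB : ∀ u w, k u w ≠ 0 → ∀ v, condDensity ν p u v ≤ B) :
    ∫ y, smoothedCondDensity ρ ν p k y ^ 2 ∂ν ≤ B * (∫ z, |uncurry k z| ∂ρ.prod ν) ^ 2 := by
  set a := ∫ z, |uncurry k z| ∂ρ.prod ν
  have hsup (y : F) : |smoothedCondDensity ρ ν p k y| ≤ B * a :=
    abs_smoothedCondDensity_le hp hp₀ hk hB y
  have hW := (integrable_kernelWeight hp hp₀ hk).abs
  have hL1 (y : F) : |smoothedCondDensity ρ ν p k y|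
      ≤ ∫ z, |kernelWeight ν p k z y| ∂jointLaw ρ ν p := by
    rw [← integral_kernelWeight hp hp₀ hk hB]
    exact abs_integral_le_integral_abs
  have hBa : 0 ≤ B * a := (abs_nonneg _).trans (hsup 0)
  calc ∫ y, smoothedCondDensity ρ ν p k y ^ 2 ∂ν
      ≤ ∫ y, B * a * ∫ z, |kernelWeight ν p k z y| ∂jointLaw ρ ν p ∂ν := by
        refine integral_mono_of_nonneg (ae_of_all _ fun y => sq_nonneg _)
          (hW.integral_prod_right.const_mul _) (ae_of_all _ fun y => ?_)
        dsimp only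
        rw [← sq_abs, sq]
        exact mul_le_mul (hsup y) (hL1 y) (abs_nonneg _) hBa
    _ = B * a * ∫ q, |uncurry (kernelWeight ν p k) q| ∂(jointLaw ρ ν p).prod ν := by
        rw [integral_const_mul, integral_prod_symm _ hW]
        rfl
    _ ≤ B * a * a := by
        gcongr
        exact integral_abs_kernelWeight_le hp hp₀ hk
    _ = B * a ^ 2 := by ring

end Mean

theorem kernelEstimator_risk_lower_bound {B c M : ℝ} [ν.IsNegInvariant] [MeasurableSpace Ω]
    {P : Measure Ω} [IsProbabilityMeasure P] [IsProbabilityMeasure (jointLaw ρ ν p)]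
    (hp : Measurable (uncurry p))
    (hp₀ : ∀ u v, 0 ≤ p u v) (hk : Integrable (uncurry k) (ρ.prod ν))
    (hk2 : Integrable (fun z => uncurry k z ^ 2) (ρ.prod ν)) (hc : 0 < c)
    (hlow : ∀ u w, k u w ≠ 0 → c ≤ marginalDensity ν p u)
    (hup : ∀ u w, k u w ≠ 0 → marginalDensity ν p u ≤ M)
    (hB : ∀ u w, k u w ≠ 0 → ∀ v, condDensity ν p u v ≤ B)
    {Z : ℕ → Ω → E × F} (hZ : ∀ i, MeasurePreserving (Z i) P (jointLaw ρ ν p))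
    (hindep : Pairwise fun i j => Z i ⟂ᵢ[P] Z j) {φ : F → ℝ} (hφ : MemLp φ 2 ν) {n : ℕ}
    (hn : n ≠ 0) :
    (∫ y, (smoothedCondDensity ρ ν p k y - φ y) ^ 2 ∂ν)
        + (n : ℝ)⁻¹ * (M⁻¹ * (∫ z, uncurry k z ^ 2 ∂ρ.prod ν)
          - B * (∫ z, |uncurry k z| ∂ρ.prod ν) ^ 2)
      ≤ ∫ ω, ∫ y, (kernelEstimator ν p k Z n ω y - φ y) ^ 2 ∂ν ∂P := by
  have hW := memLp_two_kernelWeight hp hp₀ hk.1 (integrable_sq_div_marginalDensity hp hk2 hc hlow)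
  have hrisk := integral_integral_sampleMean_sub_sq hW hZ hindep hφ hn
  simp only [integral_kernelWeight hp hp₀ hk hB, integral_sq_kernelWeight hp hp₀ hk.1] at hrisk
  simp only [kernelEstimator, hrisk]
  gcongr
  · exact inv_mul_integral_sq_le_integral_sq_div_marginalDensity hp hk2 hc hlow hup
  · exact integral_sq_smoothedCondDensity_le hp hp₀ hk hB

end KernelEstimator

section Dilation

variable {ι κ : Type*} [Fintype ι] [Fintype κ]

lemma measurePreserving_pi_div {h : ι → ℝ} (hh : ∀ i, 0 < h i) :
    MeasurePreserving (fun u : ι → ℝ => u / h) volume (ENNReal.ofReal (∏ i, h i) • volume) := by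
  classical
  have hdet : (Matrix.diagonal h⁻¹).det = (∏ i, h i)⁻¹ := by
    simp [Matrix.det_diagonal, Finset.prod_inv_distrib]
  have hpos : 0 < ∏ i, h i := Finset.prod_pos fun i _ => hh i
  have hmap := Real.smul_map_diagonal_volume_pi (D := h⁻¹) (hdet ▸ (inv_pos.2 hpos).ne')
  have hlin : ⇑(Matrix.toLin' (Matrix.diagonal h⁻¹)) = fun u : ι → ℝ => u / h := by
    ext u i
    simp [Matrix.mulVec_diagonal, div_eq_inv_mul]
  rw [hdet, hlin, abs_of_pos (inv_pos.2 hpos)] at hmap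
  refine ⟨by fun_prop, ?_⟩
  conv_rhs => rw [← hmap]
  rw [smul_smul, ← ENNReal.ofReal_mul hpos.le, mul_inv_cancel₀ hpos.ne', ENNReal.ofReal_one,
    one_smul]

lemma prod_mul_prod_pos {h : (ι → ℝ) × (κ → ℝ)} (h₁ : ∀ i, 0 < h.1 i) (h₂ : ∀ j, 0 < h.2 j) :
    0 < (∏ i, h.1 i) * ∏ j, h.2 j :=
  mul_pos (Finset.prod_pos fun i _ => h₁ i) (Finset.prod_pos fun j _ => h₂ j)

/-- The dilated kernel `K_h`, centred at `x` in its first argument: `(u, v) ↦ K_h(x - u, v)`, where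
`h` lists the bandwidths of the two groups of coordinates. -/
noncomputable def dilatedKernel (x : ι → ℝ) (h : (ι → ℝ) × (κ → ℝ))
    (K : (ι → ℝ) → (κ → ℝ) → ℝ) (u : ι → ℝ) (v : κ → ℝ) : ℝ :=
  ((∏ i, h.1 i) * ∏ j, h.2 j)⁻¹ * K ((x - u) / h.1) (v / h.2)

variable {x : ι → ℝ} {h : (ι → ℝ) × (κ → ℝ)} {K : (ι → ℝ) → (κ → ℝ) → ℝ}

lemma measurePreserving_sub_div_prod_div (x : ι → ℝ) (h₁ : ∀ i, 0 < h.1 i) (h₂ : ∀ j, 0 < h.2 j) :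
    MeasurePreserving (fun z : (ι → ℝ) × (κ → ℝ) => ((x - z.1) / h.1, z.2 / h.2)) volume
      (ENNReal.ofReal ((∏ i, h.1 i) * ∏ j, h.2 j) • volume) := by
  have hx := (measurePreserving_pi_div h₁).comp (volume.measurePreserving_sub_left x)
  have hprod := hx.prod (measurePreserving_pi_div h₂)
  rwa [Measure.prod_smul_left, Measure.prod_smul_right, smul_smul,
    ← ENNReal.ofReal_mul (Finset.prod_nonneg fun i _ => (h₁ i).le)] at hprod

lemma integrable_dilatedKernel (h₁ : ∀ i, 0 < h.1 i) (h₂ : ∀ j, 0 < h.2 j)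
    (hK : Integrable (uncurry K)) : Integrable (uncurry (dilatedKernel x h K)) :=
  ((measurePreserving_sub_div_prod_div x h₁ h₂).integrable_comp_of_integrable
    (hK.smul_measure ENNReal.ofReal_ne_top)).const_mul _

lemma integrable_sq_dilatedKernel (h₁ : ∀ i, 0 < h.1 i) (h₂ : ∀ j, 0 < h.2 j)
    (hK : Integrable fun z => uncurry K z ^ 2) :
    Integrable fun z => uncurry (dilatedKernel x h K) z ^ 2 := by
  have hsq := ((measurePreserving_sub_div_prod_div x h₁ h₂).integrable_comp_of_integrable
    (hK.smul_measure ENNReal.ofReal_ne_top)).const_mul (((∏ i, h.1 i) * ∏ j, h.2 j)⁻¹ ^ 2)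
  simpa only [uncurry, dilatedKernel, mul_pow, comp_def] using hsq

lemma integral_comp_sub_div_prod_div (h₁ : ∀ i, 0 < h.1 i) (h₂ : ∀ j, 0 < h.2 j)
    {G : (ι → ℝ) × (κ → ℝ) → ℝ} (hG : AEStronglyMeasurable G) :
    ∫ z : (ι → ℝ) × (κ → ℝ), G ((x - z.1) / h.1, z.2 / h.2)
      = ((∏ i, h.1 i) * ∏ j, h.2 j) * ∫ z, G z := by
  have hpos := prod_mul_prod_pos h₁ h₂
  have hcomp :=
    (measurePreserving_sub_div_prod_div x h₁ h₂).hasLaw.integral_comp (hG.smul_measure _)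
  rwa [integral_smul_measure, ENNReal.toReal_ofReal hpos.le, smul_eq_mul] at hcomp

lemma integral_abs_dilatedKernel (h₁ : ∀ i, 0 < h.1 i) (h₂ : ∀ j, 0 < h.2 j)
    (hK : AEStronglyMeasurable (uncurry K)) :
    ∫ z, |uncurry (dilatedKernel x h K) z| = ∫ z, |uncurry K z| := by
  have hpos := prod_mul_prod_pos h₁ h₂
  have hcomp := integral_comp_sub_div_prod_div (x := x) h₁ h₂ hK.norm
  simp only [uncurry, dilatedKernel, abs_mul, abs_of_pos (inv_pos.2 hpos), integral_const_mul]
  exact (inv_mul_eq_iff_eq_mul₀ hpos.ne').2 hcomp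

lemma integral_sq_dilatedKernel (h₁ : ∀ i, 0 < h.1 i) (h₂ : ∀ j, 0 < h.2 j)
    (hK : AEStronglyMeasurable (uncurry K)) :
    ∫ z, uncurry (dilatedKernel x h K) z ^ 2
      = ((∏ i, h.1 i) * ∏ j, h.2 j)⁻¹ * ∫ z, uncurry K z ^ 2 := by
  have hpos := prod_mul_prod_pos h₁ h₂
  have hcomp := integral_comp_sub_div_prod_div (x := x) h₁ h₂ (hK.pow 2)
  simp only [Pi.pow_apply, uncurry] at hcomp
  simp only [uncurry, dilatedKernel, mul_pow, integral_const_mul, hcomp]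
  rw [← mul_assoc, sq, inv_mul_cancel_right₀ hpos.ne']

lemma dist_le_of_dilatedKernel_ne_zero {A : ℝ} (hK : ∀ u v, A < ‖u‖ → K u v = 0)
    (h₁ : ∀ i, 0 < h.1 i) {u : ι → ℝ} {v : κ → ℝ} (hu : dilatedKernel x h K u v ≠ 0) :
    dist u x ≤ A * ‖h.1‖ := by
  have hA : ‖(x - u) / h.1‖ ≤ A := not_lt.1 fun hlt => hu (by simp [dilatedKernel, hK _ _ hlt])
  have hA₀ : 0 ≤ A := (norm_nonneg _).trans hA
  rw [dist_comm, dist_eq_norm, pi_norm_le_iff_of_nonneg (by positivity)]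
  intro i
  calc ‖(x - u) i‖ = ‖((x - u) / h.1) i‖ * ‖h.1 i‖ := by
        rw [← norm_mul, Pi.div_apply, div_mul_cancel₀ _ (h₁ i).ne']
    _ ≤ A * ‖h.1‖ := by
        gcongr
        · exact (norm_le_pi_norm _ i).trans hA
        · exact norm_le_pi_norm _ i

lemma eventually_forall_dilatedKernel_ne_zero {α : Type*} {l : Filter α} {A : ℝ}
    (hK : ∀ u v, A < ‖u‖ → K u v = 0) {h : α → (ι → ℝ) × (κ → ℝ)} (h₁ : ∀ n i, 0 < (h n).1 i)
    (hh : Tendsto (fun n => (h n).1) l (𝓝 0)) {q : (ι → ℝ) → Prop} (hq : ∀ᶠ u in 𝓝 x, q u) :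
    ∀ᶠ n in l, ∀ u v, dilatedKernel x (h n) K u v ≠ 0 → q u := by
  obtain ⟨δ, hδ, hball⟩ := Metric.eventually_nhds_iff.1 hq
  have hlim : Tendsto (fun n => A * ‖(h n).1‖) l (𝓝 0) := by simpa using hh.norm.const_mul A
  filter_upwards [hlim.eventually_lt_const hδ] with n hn u v hu
  exact hball ((dist_le_of_dilatedKernel_ne_zero hK (h₁ n) hu).trans_lt hn)

end Dilation

section Asymptotics

lemma memLp_two_condDensity {E F : Type*} [MeasurableSpace F] {ν : Measure F} {p : E → F → ℝ}
    (hp₀ : ∀ u v, 0 ≤ p u v) {x : E} (hx : 0 < marginalDensity ν p x) {B : ℝ}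
    (hB : ∀ v, condDensity ν p x v ≤ B) : MemLp (condDensity ν p x) 2 ν := by
  have hint : Integrable (condDensity ν p x) ν :=
    (Integrable.of_integral_ne_zero hx.ne').div_const _
  refine (memLp_two_iff_integrable_sq hint.1).2 <|
    (hint.const_mul B).mono' (hint.1.pow 2) (ae_of_all _ fun v => ?_)
  rw [Real.norm_of_nonneg (sq_nonneg _), sq]
  exact mul_le_mul_of_nonneg_right (hB v) (condDensity_nonneg hp₀ x v)

lemma one_sub_div_le_inv_mul {ε m : ℝ} (hε : 0 < ε) (hm : 0 < m) :
    (1 - ε) / m ≤ ((1 + ε) * m)⁻¹ := by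
  rw [mul_inv, ← div_eq_mul_inv]
  gcongr
  rw [← one_div, le_div_iff₀ (by linarith)]
  nlinarith

variable {ι κ Ω : Type*} [Fintype ι] [Fintype κ] [MeasurableSpace Ω]

theorem kernel_risk_lower_bound_asymptotic_general {P : Measure Ω} [IsProbabilityMeasure P]
    {p : (ι → ℝ) → (κ → ℝ) → ℝ} (hp : Measurable (uncurry p)) (hp₀ : ∀ u v, 0 ≤ p u v)
    {Z : ℕ → Ω → (ι → ℝ) × (κ → ℝ)}
    (hZ : ∀ i, MeasurePreserving (Z i) P (jointLaw volume volume p))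
    (hindep : Pairwise fun i j => Z i ⟂ᵢ[P] Z j) {x : ι → ℝ}
    (hcont : ContinuousAt (marginalDensity volume p) x) (hx : 0 < marginalDensity volume p x)
    {B : ℝ} (hB : ∀ᶠ u in 𝓝 x, ∀ v, condDensity volume p u v ≤ B)
    {K : (ι → ℝ) → (κ → ℝ) → ℝ} (hK : Integrable (uncurry K))
    (hK2 : Integrable fun z => uncurry K z ^ 2) {A : ℝ} (hsupp : ∀ u v, A < ‖u‖ → K u v = 0)
    {h : ℕ → (ι → ℝ) × (κ → ℝ)} (h₁ : ∀ n i, 0 < (h n).1 i) (h₂ : ∀ n j, 0 < (h n).2 j)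
    (hh : Tendsto (fun n => (h n).1) atTop (𝓝 0)) {ε : ℝ} (hε : 0 < ε) :
    ∀ᶠ n : ℕ in atTop,
      (∫ y, (smoothedCondDensity volume volume p (dilatedKernel x (h n) K) y
          - condDensity volume p x y) ^ 2)
        + (1 - ε) * (∫ z, uncurry K z ^ 2)
          / (marginalDensity volume p x * n * ((∏ i, (h n).1 i) * ∏ j, (h n).2 j))
        - B * (∫ z, |uncurry K z|) ^ 2 / n
      ≤ ∫ ω, (∫ y, (kernelEstimator volume p (dilatedKernel x (h n) K) Z n ω y
          - condDensity volume p x y) ^ 2) ∂P := by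
  set m := marginalDensity volume p x
  have : IsProbabilityMeasure (jointLaw volume volume p) := 
    (hZ 0).map_eq ▸ Measure.isProbabilityMeasure_map (hZ 0).measurable.aemeasurable
  have hφ := memLp_two_condDensity hp₀ hx hB.self_of_nhds
  have hm : ∀ᶠ u in 𝓝 x, marginalDensity volume p u ∈ Set.Icc (m / 2) ((1 + ε) * m) :=
    hcont (Icc_mem_nhds (half_lt_self hx) (lt_mul_of_one_lt_left hx (lt_add_of_pos_right 1 hε)))
  filter_upwards [eventually_ne_atTop 0,
    eventually_forall_dilatedKernel_ne_zero hsupp h₁ hh (hm.and hB)] with n hn hsuppn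
  have hrisk := kernelEstimator_risk_lower_bound hp hp₀
    (integrable_dilatedKernel (h₁ n) (h₂ n) hK) (integrable_sq_dilatedKernel (h₁ n) (h₂ n) hK2)
    (half_pos hx) (fun u v hk => (hsuppn u v hk).1.1) (fun u v hk => (hsuppn u v hk).1.2)
    (fun u v hk => (hsuppn u v hk).2) hZ hindep hφ hn
  rw [← Measure.volume_eq_prod, integral_sq_dilatedKernel (h₁ n) (h₂ n) hK.1,
    integral_abs_dilatedKernel (h₁ n) (h₂ n) hK.1] at hrisk
  have hprod := prod_mul_prod_pos (h₁ n) (h₂ n)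
  set π := (∏ i, (h n).1 i) * ∏ j, (h n).2 j
  set b := ∫ z, uncurry K z ^ 2
  have : 0 ≤ b := integral_nonneg fun _ => sq_nonneg _
  calc _ = (∫ y, (smoothedCondDensity volume volume p (dilatedKernel x (h n) K) y
          - condDensity volume p x y) ^ 2)
        + (n : ℝ)⁻¹ * ((1 - ε) / m * (π⁻¹ * b) - B * (∫ z, |uncurry K z|) ^ 2) := by
        field_simp
        ring
    _ ≤ _ := by
        gcongr
        exact one_sub_div_le_inv_mul hε hx
    _ ≤ _ := hrisk

end Asymptotics

/-- Proposition (lower bound for kernel rules), second part: when `f_X` is positive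
and continuous near `x` and the bandwidths tend to `0`, the risk of the kernel
estimator is asymptotically bounded below by
`‖K_h*f − f‖²_{x,2} + ‖K‖₂²/(f_X(x) n ∏ h_i) (1+o(1)) + O(1/n)`. -/
theorem kernel_risk_lower_bound_asymptotic
    {Ω : Type*} [MeasurableSpace Ω] (P : Measure Ω) [IsProbabilityMeasure P]
    (d1 d2 : ℕ) (hd1 : 0 < d1) (hd2 : 0 < d2)
    -- an infinite i.i.d. sequence of observations
    (X : ℕ → Ω → (Fin d1 → ℝ)) (Y : ℕ → Ω → (Fin d2 → ℝ))
    (hXmeas : ∀ i, Measurable (X i)) (hYmeas : ∀ i, Measurable (Y i))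
    (fXY : (Fin d1 → ℝ) → (Fin d2 → ℝ) → ℝ)
    (hfXYmeas : Measurable (Function.uncurry fXY)) (hfXYnonneg : ∀ u v, 0 ≤ fXY u v)
    (hdens : ∀ i, Measure.map (fun ω => (X i ω, Y i ω)) P
      = (volume : Measure ((Fin d1 → ℝ) × (Fin d2 → ℝ))).withDensity
          (fun p => ENNReal.ofReal (fXY p.1 p.2)))
    (hiid : iIndepFun (fun i ω => (X i ω, Y i ω)) P)
    -- marginal and conditional densities
    (fX : (Fin d1 → ℝ) → ℝ) (hfX : ∀ u, fX u = ∫ v, fXY u v)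
    (f : (Fin d1 → ℝ) → (Fin d2 → ℝ) → ℝ) (hf : ∀ u y, f u y = fXY u y / fX u)
    -- the fixed point; `f_X` positive and continuous on a neighborhood of `x`
    (x : Fin d1 → ℝ)
    (hfXcont : ∃ U : Set (Fin d1 → ℝ), IsOpen U ∧ x ∈ U ∧ ContinuousOn fX U ∧
      ∀ t ∈ U, 0 < fX t)
    -- (H1): `‖f‖_∞ < ∞` on the neighborhood `V(x)`
    (A : ℝ) (hA : 0 < A)
    (Fsup : ℝ) (hFsup : IsLUB {r | ∃ t, (∀ i, |t i - x i| ≤ 2 * A) ∧ ∃ y, r = f t y} Fsup)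
    -- the kernel `K(u,v) = K⁽¹⁾(u)K⁽²⁾(v)`, with `K⁽¹⁾` supported in `[-A,A]^{d1}`
    (K : (Fin d1 → ℝ) → (Fin d2 → ℝ) → ℝ) (K1 : (Fin d1 → ℝ) → ℝ) (K2 : (Fin d2 → ℝ) → ℝ)
    (hKfact : ∀ u v, K u v = K1 u * K2 v)
    (hKmeas : Measurable (Function.uncurry K))
    (hKbdd : ∃ Mb : ℝ, ∀ u v, |K u v| ≤ Mb)
    (hKint : Integrable (fun p : (Fin d1 → ℝ) × (Fin d2 → ℝ) => K p.1 p.2))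
    (hKL2 : Integrable (fun p : (Fin d1 → ℝ) × (Fin d2 → ℝ) => (K p.1 p.2) ^ 2))
    (hKtotal : (∫ u, ∫ v, K u v) = 1)
    (hK1supp : ∀ u, (∃ i, A < |u i|) → K1 u = 0)
    -- `‖K‖₁` and `‖K‖₂²`
    (nK1 : ℝ) (hnK1 : nK1 = ∫ u, ∫ v, |K u v|)
    (nK2sq : ℝ) (hnK2sq : nK2sq = ∫ u, ∫ v, (K u v) ^ 2)
    -- a sequence of bandwidths with `max_i h_i⁽ⁿ⁾ → 0`
    (hseq : ℕ → (Fin d1 → ℝ) × (Fin d2 → ℝ))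
    (hhpos : ∀ n, (∀ i, 0 < (hseq n).1 i) ∧ (∀ j, 0 < (hseq n).2 j))
    (hhto0 : (∀ i, Tendsto (fun n => (hseq n).1 i) atTop (nhds 0)) ∧
             (∀ j, Tendsto (fun n => (hseq n).2 j) atTop (nhds 0)))
    -- the dilated kernel, the estimators, and the convolutions `K_{h⁽ⁿ⁾} * f`
    (Kh : ((Fin d1 → ℝ) × (Fin d2 → ℝ)) → (Fin d1 → ℝ) → (Fin d2 → ℝ) → ℝ)
    (hKh : ∀ h' u v, Kh h' u v
      = ((∏ i, h'.1 i) * (∏ j, h'.2 j))⁻¹ * K (fun i => u i / h'.1 i) (fun j => v j / h'.2 j))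
    (fhat : ℕ → Ω → (Fin d2 → ℝ) → ℝ)
    (hfhat : ∀ n ω y, fhat n ω y
      = (n : ℝ)⁻¹ * ∑ i ∈ Finset.range n,
          Kh (hseq n) (x - X i ω) (y - Y i ω) / fX (X i ω))
    (Khf : ℕ → (Fin d1 → ℝ) → (Fin d2 → ℝ) → ℝ)
    (hKhf : ∀ n t y, Khf n t y = ∫ u, ∫ v, Kh (hseq n) (t - u) (y - v) * f u v) :
    -- conclusion
    ∀ ε : ℝ, 0 < ε → ∃ (N : ℕ) (C : ℝ), 0 < C ∧ ∀ n, N ≤ n →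
      (∫ y, (Khf n x y - f x y) ^ 2)
        + (1 - ε) * nK2sq / (fX x * n * ((∏ i, (hseq n).1 i) * (∏ j, (hseq n).2 j)))
        - C / n
      ≤ ∫ ω, (∫ y, (fhat n ω y - f x y) ^ 2) ∂P := by
  intro ε hε
  obtain rfl : fX = marginalDensity volume fXY := funext hfX
  obtain rfl : f = condDensity volume fXY := funext fun u => funext (hf u)
  obtain ⟨U, hU, hxU, hUcont, hUpos⟩ := hfXcont
  have hB : ∀ᶠ t in 𝓝 x, ∀ y, condDensity volume fXY t y ≤ Fsup := by
    filter_upwards [Metric.closedBall_mem_nhds x (by positivity : 0 < 2 * A)] with t ht y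
    exact hFsup.1 ⟨t, fun i => (dist_le_pi_dist t x i).trans ht, y, rfl⟩
  have hsupp (u) (v) (hu : A < ‖u‖) : K u v = 0 := by
    obtain ⟨i, hi⟩ := not_forall.1 (mt (pi_norm_le_iff_of_nonneg hA.le).2 hu.not_ge)
    rw [hKfact, hK1supp u ⟨i, not_le.1 hi⟩, zero_mul]
  have hrisk := kernel_risk_lower_bound_asymptotic_general (K := K) (h := hseq) hfXYmeas
    hfXYnonneg (fun i => ⟨(hXmeas i).prodMk (hYmeas i), hdens i⟩) (fun _ _ => hiid.indepFun)
    (hUcont.continuousAt (hU.mem_nhds hxU)) (hUpos x hxU) hB hKint hKL2 hsupp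
    (fun n => (hhpos n).1) (fun n => (hhpos n).2) (tendsto_pi_nhds.2 hhto0.1) hε
  obtain ⟨N, hN⟩ := eventually_atTop.1 hrisk
  obtain rfl : nK1 = ∫ z, |uncurry K z| := hnK1.trans (integral_integral hKint.abs)
  obtain rfl : nK2sq = ∫ z, uncurry K z ^ 2 := hnK2sq.trans (integral_integral hKL2)
  refine ⟨N, |Fsup * (∫ z, |uncurry K z|) ^ 2| + 1, by positivity, fun n hn => ?_⟩
  simp only [hfhat, hKhf, hKh]
  refine le_trans (sub_le_sub_left ?_ _) (hN n hn)
  gcongr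
  exact (le_abs_self _).trans (le_add_of_nonneg_right zero_le_one)
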